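/- Let q be an odd prime power of the form q = 2ab + 1, where a, b are odd positive integers with gcd(a,b) = 1. Let c be an integer with 1 ≤ c ≤ 2(a+b−1), and set c_1 = c if 1 ≤ c ≤ a+b−1 and c_1 = ⌊c/2⌋ if a+b ≤ c ≤ 2(a+b−1). Then for every integer s with 1 ≤ s ≤ ab + c_1, there exists a linear code C over 𝔽_{q²} of length n = c(q+1), dimension n − s, and minimum distance s + 1, such that C^{⊥H} ⊆ C. -/

import Mathlib

/-- Hamming weight: the number of nonzero coordinates. -/
noncomputable def wt {F : Type*} [Zero F] {n : ℕ} (x : Fin n → F) : ℕ :=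
  Set.ncard {i | x i ≠ 0}

/-- The Hermitian dual code of a linear code C ⊆ (F_{q²})^n. -/
noncomputable def dualH {F : Type*} [Field F] (q n : ℕ) (C : Submodule F (Fin n → F)) :
    Submodule F (Fin n → F) where
  carrier := {x | ∀ y ∈ C, ∑ i, x i * (y i) ^ q = 0}
  add_mem' := by
    intro a b ha hb y hy
    simp only [Set.mem_setOf_eq] at *
    simp [add_mul, Finset.sum_add_distrib, ha y hy, hb y hy]
  zero_mem' := by
    intro y hy; simp
  smul_mem' := by
    intro c x hx y hy
    simp only [Set.mem_setOf_eq] at *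
    simp [smul_eq_mul, mul_assoc, ← Finset.mul_sum, hx y hy]

/-!
Write `q = 2r + 1`. A generalized Reed–Solomon parity-check matrix with evaluation points `x` and
column multipliers `v x` defines a Hermitian dual-containing code as soon as
`∑ v x ^ (q + 1) * x ^ (q j + l) = 0` for all `j, l < s`, and the norms `w x = v x ^ (q + 1)` may be
prescribed arbitrarily in the nonzero elements of `𝔽_q`.

Take as points all `b` whose norm `b ^ (q + 1)` lies in a set `A` of `c` nonzero elements of `𝔽_q`,
with `w b = b ^ (r + 1) * f (b ^ (q + 1))`. Summing over a fibre of the norm kills every exponent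
`r + 1 + q j + l` that `q + 1` does not divide. The others have `|j - l| = r + 1` and leave sums
`∑ f β * β ^ (m + 1)` or `∑ f β * β ^ (r + m + 1)` over `A`, where `m = min j l`. On a class
`β ^ r = ±1` the factor `β ^ r` is constant, so Lagrange interpolation on the classes of `A` yields
an `f` that annihilates both, provided every class that meets `A` has more than `m + 1` elements
in `A`. Hence `A` is chosen inside one class if `c ≤ r`, and split evenly between two otherwise.
-/

open Finset Matrix Module

section HammingWeight

theorem wt_eq_hammingNorm {F : Type*} [Zero F] [DecidableEq F] {n : ℕ} (x : Fin n → F) :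
    wt x = hammingNorm x := by
  simp [wt, hammingNorm, Set.ncard_eq_toFinset_card']

variable {K ι : Type*} [Field K] [DecidableEq K] [Fintype ι]

theorem exists_mem_ne_zero_hammingNorm_le (C : Submodule K (ι → K)) {d : ℕ}
    (hd : Fintype.card ι - d < finrank K C) : ∃ x ∈ C, x ≠ 0 ∧ hammingNorm x ≤ d := by
  classical
  obtain ⟨T, -, hT⟩ := exists_subset_card_eq (s := (univ : Finset ι))
    (n := Fintype.card ι - d) (Nat.sub_le _ _)
  have hker : LinearMap.ker (LinearMap.funLeft K K ((↑) : T → ι) ∘ₗ C.subtype) ≠ ⊥ :=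
    LinearMap.ker_ne_bot_of_finrank_lt (by simpa [hT] using hd)
  obtain ⟨x, hx, hx0⟩ := Submodule.exists_mem_ne_zero_of_ne_bot hker
  have hxT (i : ι) (hi : i ∈ T) : (x : ι → K) i = 0 := congrFun hx ⟨i, hi⟩
  refine ⟨x, x.2, by simpa using hx0, ?_⟩
  calc hammingNorm (x : ι → K) ≤ #Tᶜ :=
        card_le_card fun i hi => mem_compl.2 fun hiT => (mem_filter.1 hi).2 (hxT i hiT)
    _ ≤ d := by rw [card_compl, hT]; omega

theorem finrank_le_of_forall_lt_hammingNorm {C : Submodule K (ι → K)} {s : ℕ}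
    (hC : ∀ x ∈ C, x ≠ 0 → s < hammingNorm x) : finrank K C ≤ Fintype.card ι - s := by
  by_contra! h
  obtain ⟨x, hx, hx0, hxs⟩ := exists_mem_ne_zero_hammingNorm_le C h
  exact (hC x hx hx0).not_ge hxs

theorem isLeast_wt_of_forall_lt_hammingNorm {n s : ℕ} {C : Submodule K (Fin n → K)} (hsn : s < n)
    (hdim : finrank K C = n - s) (hC : ∀ x ∈ C, x ≠ 0 → s < hammingNorm x) :
    IsLeast {d : ℕ | ∃ x ∈ C, x ≠ 0 ∧ wt x = d} (s + 1) := by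
  simp only [wt_eq_hammingNorm]
  obtain ⟨x, hx, hx0, hxs⟩ := exists_mem_ne_zero_hammingNorm_le C (d := s + 1)
    (by rw [Fintype.card_fin, hdim]; omega)
  refine ⟨⟨x, hx, hx0, hxs.antisymm (hC x hx hx0)⟩, ?_⟩
  rintro d ⟨y, hy, hy0, rfl⟩
  exact hC y hy hy0

end HammingWeight

section ParityCheck

theorem exists_vecMul_eq_of_forall_dotProduct_eq_zero {K m n : Type*} [Field K] [Fintype m]
    [Fintype n] (M : Matrix m n K) {v : n → K} (hv : ∀ y, M *ᵥ y = 0 → v ⬝ᵥ y = 0) :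
    ∃ w, w ᵥ* M = v := by
  classical
  have hmem : dotProductEquiv K n v ∈ LinearMap.range M.mulVecLin.dualMap := by
    rw [LinearMap.range_dualMap_eq_dualAnnihilator_ker, Submodule.mem_dualAnnihilator]
    exact fun y hy => hv y hy
  obtain ⟨f, hf⟩ := hmem
  obtain ⟨w, rfl⟩ := (dotProductEquiv K m).surjective f
  refine ⟨w, dotProduct_eq _ _ fun y => ?_⟩
  rw [← dotProduct_mulVec]
  exact LinearMap.congr_fun hf y

theorem dualH_ker_mulVecLin_le {F σ : Type*} [Field F] [Finite σ] {q n : ℕ} {φ : F →+* F}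
    (hφ : ∀ x, φ x = x ^ q) (hφφ : ∀ x, φ (φ x) = x) {M : Matrix σ (Fin n) F}
    (hM : M * (M.map φ)ᵀ = 0) :
    dualH q n (LinearMap.ker M.mulVecLin) ≤ LinearMap.ker M.mulVecLin := by
  cases nonempty_fintype σ
  intro x hx
  have hconj : ∀ y, M *ᵥ y = 0 → (φ ∘ x) ⬝ᵥ y = 0 := fun y hy => by
    have hxy : ∑ i, x i * y i ^ q = 0 := hx y hy
    simpa [dotProduct, ← hφ, hφφ] using congrArg φ hxy
  obtain ⟨w, hw⟩ := exists_vecMul_eq_of_forall_dotProduct_eq_zero M hconj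
  have hxw : x = (M.map φ)ᵀ *ᵥ (φ ∘ w) := by
    funext i
    rw [mulVec_transpose, ← RingHom.map_vecMul, hw, Function.comp_apply, hφφ]
  rw [LinearMap.mem_ker, mulVecLin_apply, hxw, mulVec_mulVec, hM, zero_mulVec]

theorem finrank_ker_mulVecLin_of_forall_lt_hammingNorm {K ι : Type*} [Field K] [DecidableEq K]
    [Fintype ι] {s : ℕ} {M : Matrix (Fin s) ι K}
    (hM : ∀ x ∈ LinearMap.ker M.mulVecLin, x ≠ 0 → s < hammingNorm x) :
    finrank K (LinearMap.ker M.mulVecLin) = Fintype.card ι - s := by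
  refine (finrank_le_of_forall_lt_hammingNorm hM).antisymm ?_
  have hrank := M.mulVecLin.finrank_range_add_finrank_ker
  have hrange := (LinearMap.range M.mulVecLin).finrank_le
  rw [finrank_fintype_fun_eq_card] at hrank
  rw [finrank_fin_fun] at hrange
  omega

end ParityCheck

section GeneralizedReedSolomon

/-- The parity-check matrix of the generalized Reed–Solomon code with evaluation points `α` and
column multipliers `v`: row `j` is `i ↦ v i * α i ^ j`. -/
def grsParityCheck {R ι : Type*} [CommSemiring R] (s : ℕ) (α v : ι → R) : Matrix (Fin s) ι R :=
  .of fun j i => v i * α i ^ (j : ℕ)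

theorem lt_hammingNorm_of_grsParityCheck_mulVec_eq_zero {R ι : Type*} [CommRing R] [IsDomain R]
    [DecidableEq R] [Fintype ι] {s : ℕ} {α v x : ι → R} (hα : Function.Injective α)
    (hv : ∀ i, v i ≠ 0) (hx : grsParityCheck s α v *ᵥ x = 0) (hx0 : x ≠ 0) :
    s < hammingNorm x := by
  classical
  by_contra! hs
  let supp : Finset ι := {i | x i ≠ 0}
  let e : supp ≃ Fin (hammingNorm x) := supp.equivFin
  have hsums (k : Fin (hammingNorm x)) :
      ∑ j, v (e.symm j) * x (e.symm j) * α (e.symm j) ^ (k : ℕ) = 0 := by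
    calc ∑ j, v (e.symm j) * x (e.symm j) * α (e.symm j) ^ (k : ℕ)
        = ∑ i : supp, v i * x i * α i ^ (k : ℕ) :=
          e.symm.sum_comp fun i : supp => v i * x i * α i ^ (k : ℕ)
      _ = ∑ i ∈ supp, v i * x i * α i ^ (k : ℕ) :=
          sum_coe_sort supp fun i => v i * x i * α i ^ (k : ℕ)
      _ = ∑ i, v i * x i * α i ^ (k : ℕ) :=
          sum_subset (subset_univ _) fun i _ hi => by
            have hxi : x i = 0 := by simpa [supp] using hi
            simp [hxi]
      _ = (grsParityCheck s α v *ᵥ x) ⟨k, k.2.trans_le hs⟩ :=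
          sum_congr rfl fun i _ => mul_right_comm _ _ _
      _ = 0 := congrFun hx _
  have hzero := eq_zero_of_forall_pow_sum_mul_pow_eq_zero
    (hα.comp (Subtype.val_injective.comp e.symm.injective)) hsums
  obtain ⟨i, hi⟩ := Function.ne_iff.1 hx0
  refine mul_ne_zero (hv i) hi ?_
  simpa using congrFun hzero (e ⟨i, by simpa [supp] using hi⟩)

theorem grsParityCheck_mul_map_transpose_eq_zero {R ι : Type*} [CommSemiring R] [Fintype ι]
    {q s : ℕ} {φ : R →+* R} (hφ : ∀ x, φ x = x ^ q) {α v : ι → R}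
    (hsum : ∀ j < s, ∀ l < s, ∑ i, v i ^ (q + 1) * α i ^ (q * j + l) = 0) :
    grsParityCheck s α v * ((grsParityCheck s α v).map φ)ᵀ = 0 := by
  ext l j
  rw [Matrix.zero_apply, ← hsum j j.2 l l.2, mul_apply]
  refine sum_congr rfl fun i _ => ?_
  simp only [grsParityCheck, of_apply, transpose_apply, map_apply, hφ]
  ring

end GeneralizedReedSolomon

section FiniteField

variable {K : Type*} [Field K] [Fintype K]

variable (K) in
theorem exists_isPrimitiveRoot_card_sub_one : ∃ g : K, IsPrimitiveRoot g (Fintype.card K - 1) := by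
  classical
  obtain ⟨g, hg⟩ := IsCyclic.exists_ofOrder_eq_natCard (α := Kˣ)
  rw [Nat.card_eq_fintype_card, Fintype.card_units] at hg
  exact ⟨g, IsPrimitiveRoot.coe_units_iff.2 (hg ▸ IsPrimitiveRoot.orderOf g)⟩

theorem exists_isPrimitiveRoot_of_card_eq {d e : ℕ} (hK : Fintype.card K = d * e + 1) :
    ∃ ω : K, IsPrimitiveRoot ω e := by
  obtain ⟨g, hg⟩ := exists_isPrimitiveRoot_card_sub_one K
  have hcard : Fintype.card K - 1 = d * e := by omega
  have hpos : 0 < Fintype.card K - 1 := Nat.sub_pos_of_lt Fintype.one_lt_card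
  exact ⟨g ^ d, hg.pow hpos hcard⟩

theorem exists_pow_eq_of_pow_eq_one {d e : ℕ} (hK : Fintype.card K = d * e + 1) {x : K}
    (hx : x ^ d = 1) : ∃ y, y ^ e = x := by
  obtain ⟨g, hg⟩ := exists_isPrimitiveRoot_card_sub_one K
  have hcard : Fintype.card K - 1 = e * d := by rw [hK, Nat.add_sub_cancel, mul_comm]
  have hpos : 0 < Fintype.card K - 1 := Nat.sub_pos_of_lt Fintype.one_lt_card
  have : NeZero d := ⟨by rintro rfl; omega⟩
  obtain ⟨i, -, rfl⟩ := (hg.pow hpos hcard).eq_pow_of_pow_eq_one hx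
  exact ⟨g ^ i, pow_right_comm g i e⟩

theorem card_filter_pow_eq_of_pow_eq_one [DecidableEq K] {d e : ℕ}
    (hK : Fintype.card K = d * e + 1) {x : K} (hx : x ^ d = 1) : #{y : K | y ^ e = x} = e := by
  obtain ⟨ω, hω⟩ := exists_isPrimitiveRoot_of_card_eq hK
  have hde : d * e ≠ 0 := by have := Fintype.one_lt_card (α := K); omega
  have hx0 : x ≠ 0 := by
    rintro rfl
    exact zero_ne_one ((zero_pow (left_ne_zero_of_mul hde)).symm.trans hx)
  have he : 0 < e := Nat.pos_of_ne_zero (right_ne_zero_of_mul hde)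
  have hroots : ({y : K | y ^ e = x} : Finset K) = (Polynomial.nthRoots e x).toFinset := by
    ext y
    simp [Polynomial.mem_nthRoots he]
  rw [hroots, Multiset.toFinset_card_of_nodup (hω.nthRoots_nodup hx0), hω.card_nthRoots,
    if_pos (exists_pow_eq_of_pow_eq_one hK hx)]

theorem exists_forall_sq_eq_one_pow_eq {d e : ℕ} (hK : Fintype.card K = 2 * d * e + 1) :
    ∃ τ : K → K, ∀ ε, ε ^ 2 = 1 → τ ε ^ e = ε := by
  have hroot (ε : K) : ∃ t, ε ^ 2 = 1 → t ^ e = ε := by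
    by_cases hε : ε ^ 2 = 1
    · obtain ⟨t, ht⟩ := exists_pow_eq_of_pow_eq_one hK (x := ε) (by rw [pow_mul, hε, one_pow])
      exact ⟨t, fun _ => ht⟩
    · exact ⟨0, fun h => absurd h hε⟩
  choose τ hτ using hroot
  exact ⟨τ, hτ⟩

theorem exists_ringHom_eq_pow_of_card_eq_pow {q m : ℕ} (hm : m ≠ 0)
    (hK : Fintype.card K = q ^ m) : ∃ φ : K →+* K, ∀ x, φ x = x ^ q := by
  obtain ⟨p, _⟩ := CharP.exists K
  obtain ⟨n, hp, hn⟩ := FiniteField.card K p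
  have : ExpChar K p := .prime hp
  obtain ⟨k, -, rfl⟩ := (Nat.dvd_prime_pow hp).1 (hn ▸ hK ▸ dvd_pow_self q hm)
  exact ⟨iterateFrobenius K p k, iterateFrobenius_def p k⟩

theorem sum_pow_filter_pow_eq_zero [DecidableEq K] {ω : K} {e m : ℕ} (he : e ≠ 0)
    (hω : IsPrimitiveRoot ω e) (hm : ¬ e ∣ m) (β : K) : ∑ b : K with b ^ e = β, b ^ m = 0 := by
  have hscale : ω ^ m * ∑ b : K with b ^ e = β, b ^ m = ∑ b : K with b ^ e = β, b ^ m := by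
    rw [mul_sum]
    refine sum_equiv (Equiv.mulLeft₀ ω (hω.ne_zero he)) (fun b => ?_) fun b _ => ?_
    · simp [mul_pow, hω.pow_eq_one]
    · simp [mul_pow]
  by_contra hne
  exact hm (hω.dvd_of_pow_eq_one m ((mul_eq_right₀ hne).1 hscale))

theorem card_filter_pow_mem [DecidableEq K] {d e : ℕ} (hK : Fintype.card K = d * e + 1)
    {A : Finset K} (hA : ∀ β ∈ A, β ^ d = 1) : #{b : K | b ^ e ∈ A} = #A * e := by
  calc #{b : K | b ^ e ∈ A} = ∑ β ∈ A, #{b : K | b ^ e = β} := by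
        simp only [card_eq_sum_ones, sum_fiberwise_eq_sum_filter]
    _ = #A * e := sum_const_nat fun β hβ => card_filter_pow_eq_of_pow_eq_one hK (hA β hβ)

theorem sum_mul_pow_filter_pow_mem_eq_zero [DecidableEq K] {d e M : ℕ}
    (hK : Fintype.card K = d * e + 1) {A : Finset K} (hA : ∀ β ∈ A, β ^ d = 1) (f : K → K)
    (hf : ∀ k, M = e * k → ∑ β ∈ A, f β * β ^ k = 0) :
    ∑ b : K with b ^ e ∈ A, f (b ^ e) * b ^ M = 0 := by
  have hfiber : ∑ b : K with b ^ e ∈ A, f (b ^ e) * b ^ M =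
      ∑ β ∈ A, f β * ∑ b : K with b ^ e = β, b ^ M := by
    rw [← sum_fiberwise_eq_sum_filter]
    refine sum_congr rfl fun β _ => ?_
    rw [mul_sum]
    exact sum_congr rfl fun b hb => by rw [(mem_filter.1 hb).2]
  rw [hfiber]
  by_cases hM : e ∣ M
  · obtain ⟨k, rfl⟩ := hM
    calc ∑ β ∈ A, f β * ∑ b : K with b ^ e = β, b ^ (e * k) = ∑ β ∈ A, f β * (e * β ^ k) := by
          refine sum_congr rfl fun β hβ => ?_
          rw [sum_congr rfl fun b hb => by rw [pow_mul, (mem_filter.1 hb).2], sum_const,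
            card_filter_pow_eq_of_pow_eq_one hK (hA β hβ), nsmul_eq_mul]
      _ = e * ∑ β ∈ A, f β * β ^ k := by
          rw [mul_sum]
          exact sum_congr rfl fun β _ => mul_left_comm _ _ _
      _ = 0 := by rw [hf k rfl, mul_zero]
  · obtain ⟨ω, hω⟩ := exists_isPrimitiveRoot_of_card_eq hK
    have he : e ≠ 0 := by
      rintro rfl
      simpa [hK] using Fintype.one_lt_card (α := K)
    simp [sum_pow_filter_pow_eq_zero he hω hM]

end FiniteField

section NodalWeight

open Lagrange

variable {K : Type*} [Field K] [DecidableEq K]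

theorem sum_nodalWeight_mul_pow_eq_zero (S : Finset K) {m : ℕ} (hm : m + 1 < #S) :
    ∑ β ∈ S, nodalWeight S id β * β ^ m = 0 := by
  have hdeg : (Polynomial.X ^ m : Polynomial K).degree < #S := by
    rw [Polynomial.degree_X_pow]
    exact_mod_cast (Nat.lt_succ_self m).trans hm
  have hcoeff := coeff_eq_sum (Set.injOn_id (S : Set K)) hdeg
  rw [Polynomial.coeff_X_pow, if_neg (by omega)] at hcoeff
  simpa [nodalWeight, div_eq_inv_mul] using hcoeff.symm

theorem nodalWeight_pow_eq_one [Fintype K] {d m : ℕ} (hm : m ≠ 0)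
    (hK : Fintype.card K = (d + 1) ^ m) {S : Finset K} (hS : ∀ β ∈ S, β ^ d = 1) {β : K}
    (hβ : β ∈ S) : nodalWeight S id β ^ d = 1 := by
  obtain ⟨φ, hφ⟩ := exists_ringHom_eq_pow_of_card_eq_pow hm hK
  have hfix (γ : K) (hγ : γ ∈ S) : φ γ = γ := by rw [hφ, pow_succ, hS γ hγ, one_mul]
  have hfixed : φ (nodalWeight S id β) = nodalWeight S id β := by
    rw [nodalWeight, map_prod]
    refine prod_congr rfl fun γ hγ => ?_
    simp [hfix β hβ, hfix γ (mem_of_mem_erase hγ)]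
  rw [hφ, pow_succ] at hfixed
  exact (mul_eq_right₀ (nodalWeight_ne_zero (Set.injOn_id _) hβ)).1 hfixed

/-- The Lagrange weights of the nodes `A`, taken separately on each class on which `β ↦ β ^ r` is
constant, so that the low power sums vanish class by class. This freedom to rescale each class
separately is spent on `τ`, which makes `b ^ (r + 1)` times the weight at `b ^ (2 * r + 2)` an
element of the subfield with `2 * r + 1` elements, as a norm has to be. -/
noncomputable def classWeight (r : ℕ) (A : Finset K) (τ : K → K) (β : K) : K :=
  nodalWeight {x ∈ A | x ^ r = β ^ r} id β / (β * τ (β ^ r))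

theorem sum_classWeight_mul_pow_eq_zero {r m : ℕ} {A : Finset K} (τ : K → K) (hA : 0 ∉ A)
    (hm : ∀ β ∈ A, m + 1 < #{x ∈ A | x ^ r = β ^ r}) (i : ℕ) :
    ∑ β ∈ A, classWeight r A τ β * β ^ (r * i + m + 1) = 0 := by
  rw [← sum_fiberwise_of_maps_to fun β hβ => mem_image_of_mem (· ^ r) hβ]
  refine sum_eq_zero fun ε hε => ?_
  obtain ⟨β₀, hβ₀, rfl⟩ := mem_image.1 hε
  set S : Finset K := {x ∈ A | x ^ r = β₀ ^ r} with hS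
  calc ∑ β ∈ S, classWeight r A τ β * β ^ (r * i + m + 1)
      = ∑ β ∈ S, (β₀ ^ r) ^ i / τ (β₀ ^ r) * (nodalWeight S id β * β ^ m) := by
        refine sum_congr rfl fun β hβ => ?_
        obtain ⟨hβA, hβr⟩ := mem_filter.1 hβ
        have hβ0 : β ≠ 0 := fun h => hA (h ▸ hβA)
        rw [classWeight, hβr, ← hS, pow_succ, pow_add, pow_mul, hβr]
        field_simp
    _ = 0 := by rw [← mul_sum, sum_nodalWeight_mul_pow_eq_zero S (hm β₀ hβ₀), mul_zero]

theorem classWeight_pow_two_mul [Fintype K] {r m : ℕ} (hm : m ≠ 0)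
    (hK : Fintype.card K = (2 * r + 1) ^ m) {A : Finset K} (hA : ∀ β ∈ A, β ^ (2 * r) = 1)
    {τ : K → K} (hτ : ∀ ε, ε ^ 2 = 1 → τ ε ^ (2 * r) = ε) {β : K} (hβ : β ∈ A) :
    classWeight r A τ β ^ (2 * r) = (β ^ r)⁻¹ := by
  have hnodal : nodalWeight {x ∈ A | x ^ r = β ^ r} id β ^ (2 * r) = 1 :=
    nodalWeight_pow_eq_one hm hK (fun x hx => hA x (mem_filter.1 hx).1)
      (mem_filter.2 ⟨hβ, rfl⟩)
  have hsq : (β ^ r) ^ 2 = 1 := by rw [← pow_mul, mul_comm, hA β hβ]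
  rw [classWeight, div_pow, mul_pow, hnodal, hA β hβ, hτ _ hsq, one_mul, one_div]

theorem pow_mul_classWeight_pow_eq_one [Fintype K] {r m : ℕ} (hm : m ≠ 0)
    (hK : Fintype.card K = (2 * r + 1) ^ m) {A : Finset K} (hA0 : 0 ∉ A)
    (hA : ∀ β ∈ A, β ^ (2 * r) = 1) {τ : K → K} (hτ : ∀ ε, ε ^ 2 = 1 → τ ε ^ (2 * r) = ε)
    {b : K} (hb : b ^ (2 * r + 2) ∈ A) :
    (b ^ (r + 1) * classWeight r A τ (b ^ (2 * r + 2))) ^ (2 * r) = 1 := by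
  have hnorm : (b ^ (r + 1)) ^ (2 * r) = (b ^ (2 * r + 2)) ^ r := by ring
  have hb0 : (b ^ (2 * r + 2)) ^ r ≠ 0 := pow_ne_zero r (ne_of_mem_of_not_mem hb hA0)
  rw [mul_pow, classWeight_pow_two_mul hm hK hA hτ hb, hnorm, mul_inv_cancel₀ hb0]

end NodalWeight

section PowerClasses

variable {K : Type*} [Field K] [Fintype K] {d r c : ℕ}

theorem exists_finset_card_eq_pow_eq (hK : Fintype.card K = d * r + 1) {ε : K} (hε : ε ^ d = 1)
    (hc : c ≤ r) : ∃ A : Finset K, #A = c ∧ ∀ β ∈ A, β ^ r = ε := by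
  classical
  obtain ⟨A, hA, hAc⟩ :=
    exists_subset_card_eq (hc.trans_eq (card_filter_pow_eq_of_pow_eq_one hK hε).symm)
  exact ⟨A, hAc, fun β hβ => (mem_filter.1 (hA hβ)).2⟩

theorem exists_finset_half_le_card_class [DecidableEq K]
    (hK : Fintype.card K = 2 * d * r + 1) (hc : c ≤ 2 * r) :
    ∃ A : Finset K, #A = c ∧ (∀ β ∈ A, (β ^ r) ^ 2 = 1) ∧
      ∀ β ∈ A, c / 2 ≤ #{x ∈ A | x ^ r = β ^ r} := by
  obtain ⟨A, hAc, hA⟩ := exists_finset_card_eq_pow_eq (c := c / 2) hK (one_pow _) (by omega)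
  obtain ⟨B, hBc, hB⟩ := exists_finset_card_eq_pow_eq (c := c - c / 2) hK
    (even_two_mul d).neg_one_pow (by omega)
  have hchar : ringChar K ≠ 2 := fun h => by
    have heven := FiniteField.even_card_iff_char_two.1 h
    rw [hK, mul_assoc] at heven
    omega
  have hdisj : Disjoint A B := disjoint_left.2 fun β hβA hβB =>
    Ring.neg_one_ne_one_of_char_ne_two hchar ((hB β hβB).symm.trans (hA β hβA))
  refine ⟨A ∪ B, by rw [card_union_of_disjoint hdisj]; omega, fun β hβ => ?_, fun β hβ => ?_⟩
  · rcases mem_union.1 hβ with h | h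
    · rw [hA β h, one_pow]
    · rw [hB β h, neg_one_sq]
  · rcases mem_union.1 hβ with h | h
    · calc c / 2 = #A := hAc.symm
        _ ≤ _ := card_le_card fun x hx =>
          mem_filter.2 ⟨mem_union_left B hx, (hA x hx).trans (hA β h).symm⟩
    · calc c / 2 ≤ #B := by omega
        _ ≤ _ := card_le_card fun x hx =>
          mem_filter.2 ⟨mem_union_right A hx, (hB x hx).trans (hB β h).symm⟩

theorem exists_finset_le_card_class [DecidableEq K]
    (hK : Fintype.card K = 2 * d * r + 1) (hc : c ≤ 2 * r) :
    ∃ A : Finset K, #A = c ∧ (∀ β ∈ A, (β ^ r) ^ 2 = 1) ∧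
      ∀ β ∈ A, (if c ≤ r then c else c / 2) ≤ #{x ∈ A | x ^ r = β ^ r} := by
  split_ifs with hcr
  · obtain ⟨A, hAc, hA⟩ := exists_finset_card_eq_pow_eq hK (one_pow _) hcr
    refine ⟨A, hAc, fun β hβ => by rw [hA β hβ, one_pow], fun β hβ => ?_⟩
    rw [filter_true_of_mem fun x hx => (hA x hx).trans (hA β hβ).symm, hAc]
  · exact exists_finset_half_le_card_class hK hc

end PowerClasses

section Construction

variable {F : Type*} [Field F] [Fintype F]

theorem exists_dualH_le_of_forall_sum_pow_mul_pow_eq_zero {q n s : ℕ}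
    (hF : Fintype.card F = q ^ 2) (hsn : s < n) {α v : Fin n → F} (hα : Function.Injective α)
    (hv : ∀ i, v i ≠ 0)
    (hsum : ∀ j < s, ∀ l < s, ∑ i, v i ^ (q + 1) * α i ^ (q * j + l) = 0) :
    ∃ C : Submodule F (Fin n → F),
      dualH q n C ≤ C ∧ finrank F C = n - s ∧
      IsLeast {d : ℕ | ∃ x ∈ C, x ≠ 0 ∧ wt x = d} (s + 1) := by
  classical
  obtain ⟨φ, hφ⟩ := exists_ringHom_eq_pow_of_card_eq_pow two_ne_zero hF
  have hφφ (x : F) : φ (φ x) = x := by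
    rw [hφ, hφ, ← pow_mul, ← sq, ← hF, FiniteField.pow_card]
  have hmin (x : Fin n → F) (hx : x ∈ LinearMap.ker (grsParityCheck s α v).mulVecLin)
      (hx0 : x ≠ 0) : s < hammingNorm x :=
    lt_hammingNorm_of_grsParityCheck_mulVec_eq_zero hα hv hx hx0
  have hdim : finrank F (LinearMap.ker (grsParityCheck s α v).mulVecLin) = n - s := by
    rw [finrank_ker_mulVecLin_of_forall_lt_hammingNorm hmin, Fintype.card_fin]
  exact ⟨_, dualH_ker_mulVecLin_le hφ hφφ (grsParityCheck_mul_map_transpose_eq_zero hφ hsum),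
    hdim, isLeast_wt_of_forall_lt_hammingNorm hsn hdim hmin⟩

theorem exists_dualH_le_of_forall_sum_mul_pow_eq_zero {q n s : ℕ}
    (hF : Fintype.card F = q ^ 2) (hsn : s < n) {P : Finset F} (hP : #P = n) {w : F → F}
    (hw : ∀ x ∈ P, w x ^ (q - 1) = 1)
    (hsum : ∀ j < s, ∀ l < s, ∑ x ∈ P, w x * x ^ (q * j + l) = 0) :
    ∃ C : Submodule F (Fin n → F),
      dualH q n C ≤ C ∧ finrank F C = n - s ∧
      IsLeast {d : ℕ | ∃ x ∈ C, x ≠ 0 ∧ wt x = d} (s + 1) := by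
  classical
  have hq : 1 < q := (Nat.one_lt_pow_iff two_ne_zero).1 (hF ▸ Fintype.one_lt_card)
  have hcard : Fintype.card F = (q - 1) * (q + 1) + 1 := by
    obtain ⟨r, rfl⟩ := Nat.exists_eq_add_of_lt hq
    rw [hF]
    simp only [Nat.add_sub_cancel]
    ring
  let e : Fin n ≃ P := (P.equivFinOfCardEq hP).symm
  have hα : Function.Injective fun i => (e i : F) := Subtype.val_injective.comp e.injective
  choose v hv using fun i => exists_pow_eq_of_pow_eq_one hcard (hw (e i) (e i).2)
  have hv0 (i : Fin n) : v i ≠ 0 := by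
    have hwi : w (e i) ≠ 0 := by
      intro h
      simpa [h, zero_pow (Nat.sub_ne_zero_of_lt hq)] using hw (e i) (e i).2
    exact fun h => hwi (by rw [← hv, h, zero_pow q.succ_ne_zero])
  refine exists_dualH_le_of_forall_sum_pow_mul_pow_eq_zero hF hsn hα hv0 fun j hj l hl => ?_
  simp only [hv]
  rw [e.sum_comp fun x : P => w x * (x : F) ^ (q * j + l),
    sum_coe_sort P fun x => w x * x ^ (q * j + l), hsum j hj l hl]

-- As `2 * r + 1 ≡ -1` modulo `2 * r + 2`, the divisibility says `j - l ≡ r + 1`, and `j`, `l` are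
-- too small for anything but `|j - l| = r + 1`.
theorem exists_eq_mul_add_of_add_eq_mul {r c s j l k : ℕ} (hc : c ≤ r) (hs : s ≤ r + c)
    (hj : j < s) (hl : l < s) (hk : r + 1 + ((2 * r + 1) * j + l) = (2 * r + 2) * k) :
    ∃ i m, m + 1 < c ∧ k = r * i + m + 1 := by
  have hjk : j ≤ k := by
    by_contra! h
    nlinarith [Nat.mul_le_mul_left (2 * r + 2) h]
  obtain ⟨d, rfl⟩ := Nat.exists_eq_add_of_le hjk
  have hd : l + r + 1 = (2 * r + 2) * d + j := by linarith
  have hd2 : d < 2 := by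
    by_contra! h
    nlinarith [Nat.mul_le_mul_left (2 * r + 2) h]
  interval_cases d
  · exact ⟨1, l, by omega, by omega⟩
  · exact ⟨0, j, by omega, by omega⟩

theorem stmt_12_general {q r c s : ℕ} (hq : q = 2 * r + 1) (hF : Fintype.card F = q ^ 2)
    (hc1 : 1 ≤ c) (hc2 : c ≤ 2 * r) (hs : s ≤ r + (if c ≤ r then c else c / 2)) :
    ∃ C : Submodule F (Fin (c * (q + 1)) → F),
      dualH q (c * (q + 1)) C ≤ C ∧
      finrank F C = (c * (q + 1)) - s ∧
      IsLeast {d : ℕ | ∃ x ∈ C, x ≠ 0 ∧ wt x = d} (s + 1) := by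
  classical
  subst hq
  obtain ⟨A, hAc, hAsq, hclass⟩ :=
    exists_finset_le_card_class (K := F) (d := 2 * (r + 1)) (by rw [hF]; ring) hc2
  obtain ⟨τ, hτ⟩ :=
    exists_forall_sq_eq_one_pow_eq (K := F) (d := r + 1) (e := 2 * r) (by rw [hF]; ring)
  generalize hc₁ : (if c ≤ r then c else c / 2) = c₁ at hs hclass
  obtain ⟨hc₁r, hc₁c⟩ : c₁ ≤ r ∧ c₁ ≤ c := by split_ifs at hc₁ <;> omega
  have hcard : Fintype.card F = 2 * r * (2 * r + 2) + 1 := by rw [hF]; ring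
  have hA (β : F) (hβ : β ∈ A) : β ^ (2 * r) = 1 := by rw [mul_comm, pow_mul, hAsq β hβ]
  have hA0 : 0 ∉ A := fun h => by simpa [show r ≠ 0 by omega] using hA 0 h
  refine exists_dualH_le_of_forall_sum_mul_pow_eq_zero hF (by nlinarith)
    (P := {b : F | b ^ (2 * r + 2) ∈ A}) (by rw [card_filter_pow_mem hcard hA, hAc])
    (w := fun b => b ^ (r + 1) * classWeight r A τ (b ^ (2 * r + 2)))
    (fun b hb => pow_mul_classWeight_pow_eq_one two_ne_zero hF hA0 hA hτ (mem_filter.1 hb).2)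
    fun j hj l hl => ?_
  calc _ = ∑ b : F with b ^ (2 * r + 2) ∈ A,
        classWeight r A τ (b ^ (2 * r + 2)) * b ^ (r + 1 + ((2 * r + 1) * j + l)) :=
        sum_congr rfl fun b _ => by ring
    _ = 0 := sum_mul_pow_filter_pow_mem_eq_zero hcard hA _ fun k hk => by
      obtain ⟨i, m, hm, rfl⟩ := exists_eq_mul_add_of_add_eq_mul hc₁r hs hj hl hk
      exact sum_classWeight_mul_pow_eq_zero τ hA0 (fun β hβ => hm.trans_le (hclass β hβ)) i

end Construction

/-- case q = 2ab+1 with a, b odd and coprime: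
there exists an [n, n−s, s+1]_{q²} Hermitian dual-containing code with
n = c(q+1), for 1 ≤ c ≤ 2(a+b−1) and 1 ≤ s ≤ ab + c₁, where c₁ = c if
c ≤ a+b−1 and c₁ = ⌊c/2⌋ otherwise. -/
theorem stmt_12 (q a b : ℕ) (ha : 0 < a) (hb : 0 < b) (haodd : Odd a)
    (hbodd : Odd b) (hab : Nat.gcd a b = 1) (hq : q = 2 * a * b + 1)
    (hodd : Odd q) (hpp : IsPrimePow q)
    (F : Type*) [Field F] [Fintype F] (hF : Fintype.card F = q ^ 2)
    (c s : ℕ) (hc1 : 1 ≤ c) (hc2 : c ≤ 2 * (a + b - 1))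
    (hs1 : 1 ≤ s) (hs2 : s ≤ a * b + (if c ≤ a + b - 1 then c else c / 2)) :
    ∃ C : Submodule F (Fin (c * (q + 1)) → F),
      dualH q (c * (q + 1)) C ≤ C ∧
      Module.finrank F C = (c * (q + 1)) - s ∧
      IsLeast {d : ℕ | ∃ x ∈ C, x ≠ 0 ∧ wt x = d} (s + 1) := by
  have hr : a + b - 1 ≤ a * b := Nat.add_sub_one_le_mul ha.ne' hb.ne'
  exact stmt_12_general (by rw [hq, mul_assoc]) hF hc1 (by omega) (by split_ifs at hs2 ⊢ <;> omega)
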